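/- Let 0 < α < n, λ₁, λ₂ > 0, β₁, β₂ ∈ ℝ, 1 ≤ p, q < ∞. If M_α is bounded from LM^p(φ_{λ₁}, w_{β₁}^p) to WLM^q(φ_{λ₂}, w_{β₂}^q), then β₂ − β₁ − (n−λ₁)/p + (n−λ₂)/q + α = 0 and α ≤ β₁ + (n−λ₁)/p < n. -/

import Mathlib

open MeasureTheory Metric Set ENNReal

noncomputable section

abbrev Euc (n : ℕ) := EuclideanSpace ℝ (Fin n)

/-- Extended-real weighted local Morrey norm (sup over balls centered at the origin). -/
def lmNormE (n : ℕ) (p : ℝ) (φ : ℝ → ℝ≥0∞) (w : Euc n → ℝ≥0∞) (g : Euc n → ℝ≥0∞) : ℝ≥0∞ :=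
  ⨆ (R : ℝ) (_ : 0 < R),
    ((φ R)⁻¹ * ∫⁻ x in ball (0 : Euc n) R, g x ^ p * w x) ^ (1 / p)

def lmNorm (n : ℕ) (p : ℝ) (φ : ℝ → ℝ≥0∞) (w : Euc n → ℝ≥0∞) (f : Euc n → ℝ) : ℝ≥0∞ :=
  lmNormE n p φ w (fun x => ENNReal.ofReal |f x|)

/-- Weak weighted local Morrey norm (for nonnegative extended-real valued functions). -/
def wlmNormE (n : ℕ) (q : ℝ) (ψ : ℝ → ℝ≥0∞) (v : Euc n → ℝ≥0∞) (g : Euc n → ℝ≥0∞) : ℝ≥0∞ :=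
  ⨆ (R : ℝ) (_ : 0 < R) (t : ℝ≥0∞) (_ : 0 < t),
    t * ((ψ R)⁻¹ * ∫⁻ x in {x : Euc n | x ∈ ball (0 : Euc n) R ∧ t < g x}, v x) ^ (1 / q)

def Doubling (φ : ℝ → ℝ≥0∞) : Prop := ∃ C : ℝ≥0∞, C < ⊤ ∧ ∀ R > (0 : ℝ), φ (2 * R) ≤ C * φ R

def RevDoubling (φ : ℝ → ℝ≥0∞) : Prop :=
  ∃ C : ℝ≥0∞, C < ⊤ ∧ ∀ R > (0 : ℝ), ∀ b ∈ Set.Ioo (0 : ℝ) 1,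
    ∑' j : ℕ, φ (b ^ j * R) ≤ C * φ R

/-- The fractional maximal operator `M_α` (the Hardy–Littlewood maximal
operator when `α = 0`). -/
def fracMax (n : ℕ) (α : ℝ) (g : Euc n → ℝ≥0∞) (x : Euc n) : ℝ≥0∞ :=
  ⨆ (c : Euc n) (r : ℝ) (_ : 0 < r ∧ x ∈ ball c r),
    (volume (ball c r)) ^ (α / (n : ℝ) - 1) * ∫⁻ y in ball c r, g y

/-- The fractional integral (Riesz potential) `I_α`. -/
def fracInt (n : ℕ) (α : ℝ) (g : Euc n → ℝ≥0∞) (x : Euc n) : ℝ≥0∞ :=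
  ∫⁻ y, g y * ENNReal.ofReal (‖x - y‖ ^ (α - (n : ℝ)))

/-- The Köthe dual norm of a weighted local Morrey space, evaluated on a
nonnegative (extended-real valued) function. -/
def kdualLM (n : ℕ) (p : ℝ) (φ : ℝ → ℝ≥0∞) (w : Euc n → ℝ≥0∞) (g : Euc n → ℝ≥0∞) : ℝ≥0∞ :=
  ⨆ (f : Euc n → ℝ) (_ : Measurable f ∧ lmNorm n p φ w f ≤ 1),
    ∫⁻ x, ENNReal.ofReal |f x| * g x

/-- The characteristic function of a ball, as an `ℝ≥0∞` valued function. -/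
def chiE (n : ℕ) (c : Euc n) (r : ℝ) : Euc n → ℝ≥0∞ := (ball c r).indicator fun _ => (1 : ℝ≥0∞)

/-- Samko-type Morrey parameter function `φ_λ(B) = r_B ^ λ`. -/
def phiS (lam : ℝ) : ℝ → ℝ≥0∞ := fun R => ENNReal.ofReal (R ^ lam)

/-- Power weight `w_β(x) = |x| ^ β` (raised to the exponent `s`). -/
def powW (n : ℕ) (β s : ℝ) : Euc n → ℝ≥0∞ := fun x => ENNReal.ofReal (‖x‖ ^ (β * s))


lemma lint_scale (n : ℕ) (s : ℝ) (hs : 0 < s) (g : Euc n → ℝ≥0∞) (hg : Measurable g) :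
    ∫⁻ x, g x = ENNReal.ofReal (s ^ n) * ∫⁻ x, g (s • x) := by
  have h := lintegral_map (μ := (volume : Measure (Euc n))) hg (measurable_const_smul s)
  rw [Measure.map_addHaar_smul _ hs.ne', lintegral_smul_measure] at h
  rw [← h, smul_eq_mul, ← mul_assoc, ← ENNReal.ofReal_mul (by positivity)]
  have : s ^ n * |(s ^ Module.finrank ℝ (Euc n))⁻¹| = 1 := by
    rw [finrank_euclideanSpace_fin, abs_of_pos (by positivity)]
    field_simp
  rw [this]; simp

lemma meas_pow (n : ℕ) (a : ℝ) : Measurable fun x : Euc n => ENNReal.ofReal (‖x‖ ^ a) :=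
  (measurable_norm.pow_const a).ennreal_ofReal

lemma lint_scale_set (n : ℕ) (a s : ℝ) (hs : 0 < s) (K L : Set (Euc n)) (hK : MeasurableSet K)
    (hL : MeasurableSet L) (hKL : ∀ x, s • x ∈ K ↔ x ∈ L) :
    ∫⁻ x in K, ENNReal.ofReal (‖x‖ ^ a) =
      ENNReal.ofReal (s ^ (a + n)) * ∫⁻ x in L, ENNReal.ofReal (‖x‖ ^ a) := by
  rw [← lintegral_indicator hK, lint_scale n s hs _ ((meas_pow n a).indicator hK),
    Real.rpow_add hs, mul_comm (s ^ a), ENNReal.ofReal_mul (by positivity), Real.rpow_natCast,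
    mul_assoc]
  congr 1
  rw [← lintegral_indicator hL, ← lintegral_const_mul _ ((meas_pow n a).indicator hL)]
  congr 1
  ext x
  by_cases hx : x ∈ L
  · rw [indicator_of_mem ((hKL x).2 hx), indicator_of_mem hx, norm_smul, Real.norm_of_nonneg hs.le,
      Real.mul_rpow hs.le (norm_nonneg _), ENNReal.ofReal_mul (by positivity)]
  · rw [indicator_of_notMem (fun h => hx ((hKL x).1 h)), indicator_of_notMem hx, mul_zero]

def Ann (n : ℕ) (s : ℝ) : Set (Euc n) := {x | s ≤ ‖x‖ ∧ ‖x‖ < 2 * s}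

lemma meas_Ann (n : ℕ) (s : ℝ) : MeasurableSet (Ann n s) :=
  (measurableSet_le measurable_const measurable_norm).inter
    (measurableSet_lt measurable_norm measurable_const)

lemma Ann_pos (n : ℕ) (hn : 0 < n) : 0 < volume (Ann n 1) := by
  have : Nonempty (Fin n) := ⟨⟨0, hn⟩⟩
  have h1 : IsOpen {x : Euc n | 1 < ‖x‖ ∧ ‖x‖ < 2} :=
    (isOpen_lt continuous_const continuous_norm).inter (isOpen_lt continuous_norm continuous_const)
  obtain ⟨x, hx⟩ := exists_norm_eq (Euc n) (c := 3/2) (by norm_num)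
  refine (h1.measure_pos volume ⟨x, ?_⟩).trans_le (measure_mono ?_)
  · show 1 < ‖x‖ ∧ ‖x‖ < 2
    rw [hx]; norm_num
  · rintro y ⟨h, h'⟩
    exact ⟨h.le, by linarith⟩

lemma Ann_lt_top (n : ℕ) : volume (Ann n 1) < ⊤ :=
  (measure_mono (t := ball (0 : Euc n) 2) (fun x hx => by
    have := hx.2; simp at *; linarith)).trans_lt measure_ball_lt_top

lemma Ann_int (n : ℕ) (hn : 0 < n) (a : ℝ) : ∃ J : ℝ, 0 < J ∧ ∀ s : ℝ, 0 < s →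
    ∫⁻ x in Ann n s, ENNReal.ofReal (‖x‖ ^ a) = ENNReal.ofReal (J * s ^ (a + n)) := by
  have hfin : ∫⁻ x in Ann n 1, ENNReal.ofReal (‖x‖ ^ a) < ⊤ := by
    refine (setLIntegral_mono' (g := fun _ => ENNReal.ofReal (max 1 (2 ^ a))) (meas_Ann n 1) ?_).trans_lt ?_
    · rintro x ⟨h1, h2⟩
      apply ENNReal.ofReal_le_ofReal
      rcases le_total 0 a with ha | ha
      · exact (Real.rpow_le_rpow (norm_nonneg _) (by linarith) ha).trans (le_max_right _ _)
      · exact (Real.rpow_le_one_of_one_le_of_nonpos h1 ha).trans (le_max_left _ _)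
    · rw [setLIntegral_const]
      exact ENNReal.mul_lt_top (by simp) (Ann_lt_top n)
  have hpos : 0 < ∫⁻ x in Ann n 1, ENNReal.ofReal (‖x‖ ^ a) := by
    rw [setLIntegral_pos_iff (meas_pow n a)]
    refine (Ann_pos n hn).trans_le (measure_mono fun x hx => ⟨?_, hx⟩)
    have : 0 < ‖x‖ := by linarith [hx.1]
    simp only [Function.mem_support]
    have := Real.rpow_pos_of_pos this a
    simpa using this
  refine ⟨_, ENNReal.toReal_pos hpos.ne' hfin.ne, fun s hs => ?_⟩
  rw [lint_scale_set n a s hs (Ann n s) (Ann n 1) (meas_Ann n s) (meas_Ann n 1), mul_comm,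
    ENNReal.ofReal_mul ENNReal.toReal_nonneg, ENNReal.ofReal_toReal hfin.ne]
  intro x
  simp only [Ann, mem_ofPred_eq, norm_smul, Real.norm_of_nonneg hs.le]
  constructor
  · rintro ⟨h1, h2⟩
    constructor <;> nlinarith
  · rintro ⟨h1, h2⟩
    constructor <;> nlinarith

lemma ball_int (n : ℕ) (hn : 0 < n) (a : ℝ) (ha : 0 < a + n) : ∃ J : ℝ, 0 ≤ J ∧ ∀ s : ℝ, 0 < s →
    ∫⁻ x in ball (0 : Euc n) s, ENNReal.ofReal (‖x‖ ^ a) = ENNReal.ofReal (J * s ^ (a + n)) := by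
  have hfin : ∫⁻ x in ball (0 : Euc n) 1, ENNReal.ofReal (‖x‖ ^ a) < ⊤ := by
    have : IntegrableOn (fun x : Euc n => ‖x‖ ^ a) (ball 0 1) := by
      refine integrableOn_ball_of_norm_le_rpow (α := -a) (C := 1) ?_ ?_ ?_ ?_
      · rw [finrank_euclideanSpace_fin]; exact hn
      · rw [finrank_euclideanSpace_fin]; linarith
      · refine Filter.Eventually.of_forall fun x => ?_
        rw [Real.norm_of_nonneg (by positivity)]; simp
      · exact (measurable_norm.pow_const a).aestronglyMeasurable
    have h2 := this.2
    rw [hasFiniteIntegral_iff_ofReal (Filter.Eventually.of_forall fun x => by positivity)] at h2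
    exact h2
  refine ⟨(∫⁻ x in ball (0 : Euc n) 1, ENNReal.ofReal (‖x‖ ^ a)).toReal, ENNReal.toReal_nonneg, fun s hs => ?_⟩
  rw [lint_scale_set n a s hs (ball 0 s) (ball 0 1) measurableSet_ball measurableSet_ball, mul_comm,
    ENNReal.ofReal_mul ENNReal.toReal_nonneg, ENNReal.ofReal_toReal hfin.ne]
  intro x
  simp only [mem_ball_zero_iff, norm_smul, Real.norm_of_nonneg hs.le]
  constructor
  · intro h; nlinarith
  · intro h; nlinarith

lemma ball_int_top (n : ℕ) (hn : 0 < n) (a : ℝ) (ha : a + n ≤ 0) :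
    ∫⁻ x in ball (0 : Euc n) 1, ENNReal.ofReal (‖x‖ ^ a) = ⊤ := by
  have : Nonempty (Fin n) := ⟨⟨0, hn⟩⟩
  by_contra hc
  have hI : IntegrableOn (fun x : Euc n => ‖x‖ ^ a) (ball 0 1) := by
    refine ⟨(measurable_norm.pow_const a).aestronglyMeasurable, ?_⟩
    rw [hasFiniteIntegral_iff_ofReal (Filter.Eventually.of_forall fun x => by positivity)]
    exact lt_top_iff_ne_top.2 hc
  rw [integrableOn_fun_norm_addHaar (volume : Measure (Euc n)) (f := fun y => y ^ a), finrank_euclideanSpace_fin] at hI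
  have h2 : IntegrableOn (fun y : ℝ => y ^ (a + n - 1)) (Ioo 0 1) := by
    refine hI.congr_fun ?_ measurableSet_Ioo
    intro y hy
    simp only [smul_eq_mul]
    rw [← Real.rpow_natCast, ← Real.rpow_add hy.1, Nat.cast_sub hn]
    congr 1; push_cast; ring
  rw [intervalIntegral.integrableOn_Ioo_rpow_iff one_pos] at h2
  linarith

lemma fracMax_ge (n : ℕ) (α : ℝ) (g : Euc n → ℝ≥0∞) (r : ℝ) (hr : 0 < r) (x : Euc n)
    (hx : x ∈ ball (0 : Euc n) r) :
    (volume (ball (0 : Euc n) r)) ^ (α / (n : ℝ) - 1) * ∫⁻ y in ball (0 : Euc n) r, g y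
      ≤ fracMax n α g x :=
  le_iSup_of_le 0 <| le_iSup_of_le r <| le_iSup_of_le ⟨hr, hx⟩ le_rfl

lemma wlm_ge (n : ℕ) (q lam β J : ℝ) (hq : 0 < q)
    (hJ : ∀ s : ℝ, 0 < s →
      ∫⁻ x in Ann n s, ENNReal.ofReal (‖x‖ ^ (β * q)) = ENNReal.ofReal (J * s ^ (β * q + n)))
    (ρ : ℝ) (hρ : 0 < ρ) (t : ℝ≥0∞) (ht : 0 < t) (g : Euc n → ℝ≥0∞)
    (hg : ∀ x ∈ ball (0 : Euc n) (2 * ρ), t < g x) :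
    t * (ENNReal.ofReal (((2 * ρ) ^ lam)⁻¹ * (J * ρ ^ (β * q + n)))) ^ (1 / q) ≤
      wlmNormE n q (phiS lam) (powW n β q) g := by
  refine le_iSup_of_le (2 * ρ) <| le_iSup_of_le (by positivity) <| le_iSup_of_le t <|
    le_iSup_of_le ht ?_
  have h2 : (0:ℝ) < (2 * ρ) ^ lam := by positivity
  rw [ENNReal.ofReal_mul (by positivity), ← hJ ρ hρ, ENNReal.ofReal_inv_of_pos h2]
  gcongr
  case hfg => exact le_rfl
  · exact le_rfl
  · intro x hx
    have hx' : x ∈ ball (0 : Euc n) (2 * ρ) := by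
      simpa using hx.2
    exact ⟨hx', hg x hx'⟩

lemma lm_le (n : ℕ) (p lam β J : ℝ) (hp : 0 < p) (hlam : 0 < lam)
    (hJ : ∀ s : ℝ, 0 < s →
      ∫⁻ x in Ann n s, ENNReal.ofReal (‖x‖ ^ (β * p)) = ENNReal.ofReal (J * s ^ (β * p + n)))
    (s : ℝ) (hs : 0 < s) :
    lmNorm n p (phiS lam) (powW n β p) ((Ann n s).indicator fun _ => (1 : ℝ)) ≤
      (ENNReal.ofReal ((s ^ lam)⁻¹ * (J * s ^ (β * p + n)))) ^ (1 / p) := by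
  have hfun : (fun x : Euc n => ENNReal.ofReal |(Ann n s).indicator (fun _ => (1 : ℝ)) x| ^ p *
      powW n β p x) = (Ann n s).indicator (fun x => ENNReal.ofReal (‖x‖ ^ (β * p))) := by
    ext x
    by_cases hx : x ∈ Ann n s
    · simp [hx, powW]
    · simp [hx, hp]
  refine iSup₂_le fun R hR => ?_
  refine ENNReal.rpow_le_rpow ?_ (by positivity)
  show _ * ∫⁻ x in ball (0 : Euc n) R, (fun x : Euc n => ENNReal.ofReal |(Ann n s).indicator (fun _ => (1 : ℝ)) x| ^ p *
      powW n β p x) x ≤ _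
  rw [hfun]
  rcases le_total R s with h | h
  · have : ∫⁻ x in ball (0 : Euc n) R,
        (Ann n s).indicator (fun x => ENNReal.ofReal (‖x‖ ^ (β * p))) x = 0 := by
      rw [setLIntegral_eq_zero_iff measurableSet_ball ((meas_pow n _).indicator (meas_Ann n s))]
      refine Filter.Eventually.of_forall fun x hx => ?_
      apply indicator_of_notMem
      intro h'
      have := h'.1
      simp at hx
      linarith
    rw [this]; simp
  · rw [ENNReal.ofReal_mul (by positivity), ← hJ s hs, ENNReal.ofReal_inv_of_pos (by positivity)]
    unfold phiS
    refine mul_le_mul' (by gcongr) ?_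
    rw [← lintegral_indicator (meas_Ann n s)]
    exact setLIntegral_le_lintegral _ _

lemma key (n : ℕ) (hn : 0 < n) (α : ℝ) 
    (lam1 lam2 : ℝ) (hlam1 : 0 < lam1) (β1 β2 : ℝ)
    (p q : ℝ) (hp : 1 ≤ p) (hq : 1 ≤ q)
    (hbdd : ∃ C : ℝ≥0∞, C < ⊤ ∧ ∀ f : Euc n → ℝ, Measurable f →
      wlmNormE n q (phiS lam2) (powW n β2 q) (fracMax n α fun x => ENNReal.ofReal |f x|) ≤
        C * lmNorm n p (phiS lam1) (powW n β1 p) f) :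
    ∃ K : ℝ, ∀ s ρ : ℝ, 0 < ρ → ρ ≤ s →
      s ^ α * ρ ^ (β2 + (n - lam2) / q) ≤ K * s ^ (β1 + (n - lam1) / p) := by
  obtain ⟨C, hC, hb⟩ := hbdd
  have hn' : (0:ℝ) < n := by exact_mod_cast hn
  obtain ⟨J1, hJ1, h1⟩ := Ann_int n hn (β1 * p)
  obtain ⟨J2, hJ2, h2⟩ := Ann_int n hn (β2 * q)
  obtain ⟨JA, hJA, hA⟩ := Ann_int n hn 0
  have hp0 : 0 < p := by linarith
  have hq0 : 0 < q := by linarith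
  have : Nonempty (Fin n) := ⟨⟨0, hn⟩⟩
  obtain ⟨V, hV, hVol⟩ : ∃ V : ℝ, 0 < V ∧ ∀ r : ℝ, 0 < r →
      volume (ball (0 : Euc n) r) = ENNReal.ofReal (V * r ^ (n:ℝ)) := by
    refine ⟨(volume (ball (0 : Euc n) 1)).toReal, ENNReal.toReal_pos
      (measure_ball_pos _ _ one_pos).ne' measure_ball_lt_top.ne, fun r hr => ?_⟩
    rw [Measure.addHaar_ball _ _ hr.le, finrank_euclideanSpace_fin,
      ENNReal.ofReal_mul ENNReal.toReal_nonneg,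
      ENNReal.ofReal_toReal measure_ball_lt_top.ne, Real.rpow_natCast, mul_comm]
  have hAvol : ∀ s : ℝ, 0 < s → volume (Ann n s) = ENNReal.ofReal (JA * s ^ (n:ℝ)) := by
    intro s hs
    have := hA s hs
    simpa using this
  set T : ℝ := (V * 2 ^ (n:ℝ)) ^ (α / n - 1) * JA with hT
  have hTpos : 0 < T := by positivity
  set c : ℝ := T / 2 * ((2 ^ lam2)⁻¹ * J2) ^ (1 / q) with hc
  have hcpos : 0 < c := by positivity
  refine ⟨c⁻¹ * (C.toReal * J1 ^ (1 / p)), fun s ρ hρ hρs => ?_⟩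
  have hs : 0 < s := by linarith
  have hM : ∀ x ∈ ball (0 : Euc n) (2 * ρ), ENNReal.ofReal (T / 2 * s ^ α) <
      fracMax n α (fun x => ENNReal.ofReal |(Ann n s).indicator (fun _ => (1 : ℝ)) x|) x := by
    intro x hx
    have hx' : x ∈ ball (0 : Euc n) (2 * s) := ball_subset_ball (by linarith) hx
    refine lt_of_lt_of_le ?_ (fracMax_ge n α _ (2 * s) (by linarith) x hx')
    have hi : ∫⁻ y in ball (0 : Euc n) (2 * s),
        ENNReal.ofReal |(Ann n s).indicator (fun _ => (1 : ℝ)) y| = volume (Ann n s) := by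
      have : (fun y => ENNReal.ofReal |(Ann n s).indicator (fun _ => (1 : ℝ)) y|) =
          (Ann n s).indicator (fun _ => (1 : ℝ≥0∞)) := by
        ext y
        by_cases hy : y ∈ Ann n s <;> simp [hy]
      rw [this, lintegral_indicator (meas_Ann n s), setLIntegral_one,
        Measure.restrict_apply (meas_Ann n s), inter_eq_left.2]
      intro y hy
      simpa using hy.2
    rw [hi, hAvol s hs, hVol (2 * s) (by linarith), ENNReal.ofReal_rpow_of_pos (by positivity),
      ← ENNReal.ofReal_mul (by positivity)]
    have e : (V * (2 * s) ^ (n:ℝ)) ^ (α / n - 1) * (JA * s ^ (n:ℝ)) = T * s ^ α := by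
      rw [Real.mul_rpow (by norm_num) hs.le, ← mul_assoc V, Real.mul_rpow (by positivity) (by positivity),
        ← Real.rpow_mul hs.le]
      have : s ^ α = s ^ ((n:ℝ) * (α / n - 1)) * s ^ (n:ℝ) := by
        rw [← Real.rpow_add hs]; congr 1; field_simp; ring
      rw [this, hT]; ring
    rw [e, ENNReal.ofReal_lt_ofReal_iff (by positivity)]
    have : 0 < T * s ^ α := by positivity
    linarith
  have hlow := wlm_ge n q lam2 β2 J2 hq0 h2 ρ hρ (ENNReal.ofReal (T / 2 * s ^ α))
    (by rw [ENNReal.ofReal_pos]; positivity) _ hM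
  have hup := lm_le n p lam1 β1 J1 hp0 hlam1 h1 s hs
  have hmid := hb _ ((measurable_const (a := (1:ℝ))).indicator (meas_Ann n s))
  have hall := (hlow.trans hmid).trans (mul_le_mul_right hup C)
  rw [← ENNReal.ofReal_toReal hC.ne, ENNReal.ofReal_rpow_of_pos (by positivity),
    ENNReal.ofReal_rpow_of_pos (by positivity),
    ← ENNReal.ofReal_mul (by positivity), ← ENNReal.ofReal_mul (by positivity),
    ENNReal.ofReal_le_ofReal_iff (by positivity)] at hall
  have eL : T / 2 * s ^ α * (((2 * ρ) ^ lam2)⁻¹ * (J2 * ρ ^ (β2 * q + n))) ^ (1 / q)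
      = c * (s ^ α * ρ ^ (β2 + (n - lam2) / q)) := by
    have : ((2 * ρ) ^ lam2)⁻¹ * (J2 * ρ ^ (β2 * q + n)) =
        ((2 ^ lam2)⁻¹ * J2) * ρ ^ (β2 * q + n - lam2) := by
      rw [Real.mul_rpow (by norm_num) hρ.le, Real.rpow_sub hρ, mul_inv]
      ring
    rw [this, Real.mul_rpow (by positivity) (by positivity), ← Real.rpow_mul hρ.le,
      show (β2 * q + n - lam2) * (1 / q) = β2 + (n - lam2) / q by field_simp; ring, hc]
    ring
  have eR : ((s ^ lam1)⁻¹ * (J1 * s ^ (β1 * p + n))) ^ (1 / p)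
      = J1 ^ (1 / p) * s ^ (β1 + (n - lam1) / p) := by
    have : (s ^ lam1)⁻¹ * (J1 * s ^ (β1 * p + n)) = J1 * s ^ (β1 * p + n - lam1) := by
      rw [Real.rpow_sub hs]; ring
    rw [this, Real.mul_rpow (by positivity) (by positivity), ← Real.rpow_mul hs.le,
      show (β1 * p + n - lam1) * (1 / p) = β1 + (n - lam1) / p by field_simp; ring]
  rw [eL, eR] at hall
  rw [mul_assoc, mul_assoc, inv_mul_eq_div, le_div_iff₀ hcpos]
  linarith

/-- a power bounded near zero has nonnegative exponent -/
lemma exp_nonneg_of_bdd (e K : ℝ) (h : ∀ s : ℝ, 0 < s → s ≤ 1 → s ^ e ≤ K) : 0 ≤ e := by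
  by_contra! he
  have := (tendsto_rpow_neg_nhdsGT_zero he).eventually (Filter.eventually_gt_atTop K)
  have h3 : ∀ᶠ s : ℝ in nhdsWithin 0 (Ioi 0), s ∈ Ioo (0:ℝ) 1 := Ioo_mem_nhdsGT one_pos
  obtain ⟨s, hs, hs1⟩ := (this.and h3).exists
  linarith [h s hs1.1 hs1.2.le]

lemma wlm_top (n : ℕ) (hn : 0 < n) (q lam β : ℝ) (hq : 0 < q) (g : Euc n → ℝ≥0∞)
    (hg : ∀ x ∈ ball (0 : Euc n) 2, g x = ⊤) :
    wlmNormE n q (phiS lam) (powW n β q) g = ⊤ := by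
  obtain ⟨J2, hJ2, h2⟩ := Ann_int n hn (β * q)
  set A : ℝ≥0∞ := (ENNReal.ofReal (((2 * 1) ^ lam)⁻¹ * (J2 * 1 ^ (β * q + n)))) ^ (1 / q) with hA
  have hA0 : A ≠ 0 := by
    rw [hA, ENNReal.ofReal_rpow_of_pos (by positivity), Ne, ENNReal.ofReal_eq_zero, not_le]
    positivity
  have hAt : A ≠ ⊤ := by
    rw [hA, ENNReal.ofReal_rpow_of_pos (by positivity)]
    exact ENNReal.ofReal_ne_top
  by_contra hne
  set W := wlmNormE n q (phiS lam) (powW n β q) g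
  have key := wlm_ge n q lam β J2 hq h2 1 one_pos (W / A + 1) (by simp) g (fun x hx => by
    rw [hg x (by simpa using hx)]
    exact ENNReal.add_lt_top.2 ⟨ENNReal.div_lt_top hne hA0, by simp⟩)
  rw [← hA, add_mul, ENNReal.div_mul_cancel hA0 hAt, one_mul] at key
  exact absurd key (not_le.2 (ENNReal.lt_add_right hne hA0))

lemma upper (n : ℕ) (hn : 0 < n) (α : ℝ)
    (lam1 lam2 : ℝ) (hlam1 : 0 < lam1) (β1 β2 : ℝ)
    (p q : ℝ) (hp : 1 ≤ p) (hq : 1 ≤ q)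
    (hbdd : ∃ C : ℝ≥0∞, C < ⊤ ∧ ∀ f : Euc n → ℝ, Measurable f →
      wlmNormE n q (phiS lam2) (powW n β2 q) (fracMax n α fun x => ENNReal.ofReal |f x|) ≤
        C * lmNorm n p (phiS lam1) (powW n β1 p) f) :
    β1 + (n - lam1) / p < n := by
  by_contra! hγ
  obtain ⟨C, hC, hb⟩ := hbdd
  have hn' : (0:ℝ) < n := by exact_mod_cast hn
  have hp0 : 0 < p := by linarith
  have hq0 : 0 < q := by linarith
  set γ := β1 + (n - lam1) / p with hγd
  have : Nonempty (Fin n) := ⟨⟨0, hn⟩⟩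
  obtain ⟨J, hJ, hJi⟩ := ball_int n hn (lam1 - n) (by linarith)
  have hm : Measurable fun x : Euc n => ‖x‖ ^ (-γ) := measurable_norm.pow_const _
  set f : Euc n → ℝ := (ball (0 : Euc n) 1).indicator fun x => ‖x‖ ^ (-γ) with hf
  have hfm : Measurable f := hm.indicator measurableSet_ball
  have h := hb f hfm
  rw [wlm_top n hn q lam2 β2 hq0] at h
  · have hl : lmNorm n p (phiS lam1) (powW n β1 p) f ≤ ENNReal.ofReal J ^ (1 / p) := by
      refine iSup₂_le fun R hR => ?_
      refine ENNReal.rpow_le_rpow ?_ (by positivity)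
      have : ∫⁻ x in ball (0 : Euc n) R, ENNReal.ofReal |f x| ^ p * powW n β1 p x ≤
          ENNReal.ofReal (J * R ^ lam1) := by
        rw [show lam1 = lam1 - n + n by ring, ← hJi R hR]
        refine lintegral_mono fun x => ?_
        by_cases hx : x ∈ ball (0 : Euc n) 1
        · rcases eq_or_ne x 0 with h0 | h0
          · have : f x = 0 := by
              rw [hf, indicator_of_mem hx, h0, norm_zero, Real.zero_rpow (by linarith)]
            simp [this, hp0]
          · have hx0 : 0 < ‖x‖ := norm_pos_iff.2 h0
            have : f x = ‖x‖ ^ (-γ) := by rw [hf, indicator_of_mem hx]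
            rw [this, abs_of_pos (by positivity), ENNReal.ofReal_rpow_of_pos (by positivity), powW,
              ← ENNReal.ofReal_mul (by positivity), ← Real.rpow_mul hx0.le, ← Real.rpow_add hx0]
            apply le_of_eq
            congr 2
            rw [hγd]; field_simp; ring
        · have : f x = 0 := by rw [hf, indicator_of_notMem hx]
          simp [this, hp0]
      calc _ ≤ (phiS lam1 R)⁻¹ * ENNReal.ofReal (J * R ^ lam1) := by gcongr
        _ = ENNReal.ofReal J := by
          have hR' : 0 < R ^ lam1 := by positivity
          rw [phiS, ← ENNReal.ofReal_inv_of_pos hR', ← ENNReal.ofReal_mul (by positivity)]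
          congr 1; field_simp
    have h5 : C * lmNorm n p (phiS lam1) (powW n β1 p) f < ⊤ := by
      refine ENNReal.mul_lt_top hC (hl.trans_lt ?_)
      exact ENNReal.rpow_lt_top_of_nonneg (by positivity) ENNReal.ofReal_ne_top
    exact absurd h (not_le.2 h5)
  · intro x hx
    refine top_le_iff.1 (le_trans (le_of_eq ?_) (fracMax_ge n α _ 2 (by norm_num) x hx))
    have : ∫⁻ y in ball (0 : Euc n) 2, ENNReal.ofReal |f y| = ⊤ := by
      refine top_le_iff.1 ?_
      rw [← ball_int_top n hn (-γ) (by linarith)]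
      refine le_trans (setLIntegral_mono' measurableSet_ball fun x hx => ?_)
        (lintegral_mono_set (ball_subset_ball (by norm_num : (1:ℝ) ≤ 2)))
      rw [hf, indicator_of_mem hx, abs_of_nonneg (by positivity)]
    rw [this, ENNReal.mul_top]
    exact (ENNReal.rpow_pos (measure_ball_pos _ _ (by norm_num)) measure_ball_lt_top.ne).ne'

theorem stmt14 (n : ℕ) (hn : 0 < n) (α : ℝ) (hα : 0 < α) (hαn : α < n)
    (lam1 lam2 : ℝ) (hlam1 : 0 < lam1) (hlam2 : 0 < lam2) (β1 β2 : ℝ)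
    (p q : ℝ) (hp : 1 ≤ p) (hq : 1 ≤ q)
    (hbdd : ∃ C : ℝ≥0∞, C < ⊤ ∧ ∀ f : Euc n → ℝ, Measurable f →
      wlmNormE n q (phiS lam2) (powW n β2 q) (fracMax n α fun x => ENNReal.ofReal |f x|) ≤
        C * lmNorm n p (phiS lam1) (powW n β1 p) f) :
    β2 - β1 - (n - lam1) / p + (n - lam2) / q + α = 0 ∧
    α ≤ β1 + (n - lam1) / p ∧ β1 + (n - lam1) / p < n := by
  obtain ⟨K, hK⟩ := key n hn α lam1 lam2 hlam1 β1 β2 p q hp hq hbdd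
  set γ := β1 + (n - lam1) / p with hγ
  set δ := β2 + (n - lam2) / q with hδ
  have e1 : 0 ≤ α + δ - γ := by
    refine exp_nonneg_of_bdd _ K fun s hs _ => ?_
    rw [Real.rpow_sub hs, Real.rpow_add hs, div_le_iff₀ (by positivity)]
    exact hK s s hs le_rfl
  have e2 : 0 ≤ -(α + δ - γ) := by
    refine exp_nonneg_of_bdd _ K fun s hs _ => ?_
    have hi : 0 < s⁻¹ := by positivity
    rw [Real.rpow_neg hs.le, ← Real.inv_rpow hs.le, Real.rpow_sub hi, Real.rpow_add hi,
      div_le_iff₀ (by positivity)]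
    exact hK s⁻¹ s⁻¹ hi le_rfl
  have e3 : 0 ≤ δ := by
    refine exp_nonneg_of_bdd _ K fun s hs hs1 => ?_
    simpa using hK 1 s hs hs1
  refine ⟨?_, by linarith, upper n hn α lam1 lam2 hlam1 β1 β2 p q hp hq hbdd⟩
  have : α + (β2 + (n - lam2) / q) - (β1 + (n - lam1) / p) = 0 := by rw [← hγ, ← hδ]; linarith
  linarith
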